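/- M · (M.map σ) = 3 · I₅, where M ∈ M₅(K) is the matrix with rows (α, 0, 0, 0, 0), (0, σ(α), 0, 0, 0), (α+6, 0, α, 0, 0), (0, 0, 0, α, 0), (−3(5α−3), 4(2α+1), 3(α+6), 0, α), and I₅ is the 5×5 identity matrix. -/

import Mathlib

/-- Let `K` be a field of characteristic zero, let `α ∈ K`
satisfy `α² + α + 3 = 0`, and let `σ : K → K` be a ring homomorphism with
`σ(α) = −1 − α`.  Then `M · (M.map σ) = 3·I₅` for the explicit 5×5 matrix `M`
below. -/
theorem matrix5_mul_map_eq_three_smul_one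
    {K : Type*} [Field K] [CharZero K] (α : K) (σ : K →+* K)
    (hα : α^2 + α + 3 = 0) (hσ : σ α = -1 - α)
    (M : Matrix (Fin 5) (Fin 5) K)
    (hM : M = !![α, 0, 0, 0, 0;
                 0, σ α, 0, 0, 0;
                 α + 6, 0, α, 0, 0;
                 0, 0, 0, α, 0;
                 -3*(5*α - 3), 4*(2*α + 1), 3*(α + 6), 0, α]) :
    M * M.map σ = (3 : K) • (1 : Matrix (Fin 5) (Fin 5) K) := by
  subst hM
  ext i j
  -- The entries that are not identities in `α` are multiples of `α² + α + 3`: the diagonal ones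
  -- (from `α * σ α = 3`), and those at positions (3,1), (5,3) and (5,1), rows and columns
  -- counted from 1, in the order of the coefficients below.
  fin_cases i <;> fin_cases j <;>
    simp [Matrix.mul_apply, Fin.sum_univ_five, hσ, map_ofNat] <;>
    first
      | ring1
      | linear_combination -hα
      | linear_combination -2 * hα
      | linear_combination -6 * hα
      | linear_combination 27 * hα
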